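/- Let P = (P⁻ ∪ P⁺, ≤) be an oriented mirror poset and let S, T be complete closed subsets. Define S ⊑ T iff d(P⁻, T) = d(P⁻, S) + d(S, T), where d(A,B) = |A ∖ B| = |B ∖ A| for complete closed subsets A, B. Then S ⊑ T if and only if S ∩ P⁺ ⊆ T ∩ P⁺. -/

import Mathlib

/-- In an oriented mirror poset with base `P⁻ = Pm`, for complete closed subsets
`S`, `T`, with `d(A,B) = |B ∖ A|`:
`d(P⁻,T) = d(P⁻,S) + d(S,T)` iff `S ∩ P⁺ ⊆ T ∩ P⁺`. -/
theorem stmt5 {α : Type*} [PartialOrder α] [Finite α] (bar : α → α)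
    (hinv : ∀ a, bar (bar a) = a)
    (hne : ∀ a, bar a ≠ a)
    (hincomp : ∀ a : α, ¬ a ≤ bar a ∧ ¬ bar a ≤ a)
    (hmirror : ∀ a b : α, a ≤ b ↔ bar b ≤ bar a)
    (Pm : Set α)
    (hPmClosed : IsLowerSet Pm)
    (hPmComplete : ∀ a, a ∈ Pm ↔ bar a ∉ Pm)
    (S T : Set α)
    (hSclosed : IsLowerSet S) (hScomplete : ∀ a, a ∈ S ↔ bar a ∉ S)
    (hTclosed : IsLowerSet T) (hTcomplete : ∀ a, a ∈ T ↔ bar a ∉ T) :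
    (T \ Pm).ncard = (S \ Pm).ncard + (T \ S).ncard ↔ S ∩ Pmᶜ ⊆ T ∩ Pmᶜ := by
  have hinj : Function.Injective bar := fun a b h => by
    rw [← hinv a, ← hinv b, h]
  have hdec : T \ S = ((T \ Pm) \ (S \ Pm)) ∪ bar '' ((S \ Pm) \ (T \ Pm)) := by
    ext x
    have h1 := hPmComplete x
    have h2 := hScomplete x
    have h3 := hTcomplete x
    have hx : x ∈ bar '' ((S \ Pm) \ (T \ Pm)) ↔ bar x ∈ (S \ Pm) \ (T \ Pm) := by
      constructor
      · rintro ⟨y, hy, rfl⟩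
        rwa [hinv]
      · intro h
        exact ⟨bar x, h, hinv x⟩
    rw [Set.mem_union, hx]
    simp only [Set.mem_diff]
    tauto
  have hdisj : Disjoint ((T \ Pm) \ (S \ Pm)) (bar '' ((S \ Pm) \ (T \ Pm))) := by
    rw [Set.disjoint_left]
    rintro x hx ⟨y, hy, rfl⟩
    have h1 := hPmComplete y
    simp only [Set.mem_diff] at hx hy
    tauto
  have hcard : (T \ S).ncard =
      ((T \ Pm) \ (S \ Pm)).ncard + ((S \ Pm) \ (T \ Pm)).ncard := by
    rw [hdec, Set.ncard_union_eq hdisj (Set.toFinite _) (Set.toFinite _),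
      Set.ncard_image_of_injective _ hinj]
  have e1 := Set.ncard_diff_add_ncard (T \ Pm) (S \ Pm) (Set.toFinite _) (Set.toFinite _)
  have e2 := Set.ncard_diff_add_ncard (S \ Pm) (T \ Pm) (Set.toFinite _) (Set.toFinite _)
  rw [Set.union_comm] at e2
  have key : S ∩ Pmᶜ ⊆ T ∩ Pmᶜ ↔ ((S \ Pm) \ (T \ Pm)).ncard = 0 := by
    rw [Set.ncard_eq_zero (Set.toFinite _), Set.diff_eq_empty]
    rfl
  rw [key]
  omega
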